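/- There exists N such that for all n ≥ N and every prime p the following holds. Let G be any set of at most p^{n/4} query functions g : X̂_{n,p} → {−1,+1}, and let P = {L_a ∈ 𝓛_{n,p} : L_a is p^{−n/3}-independent from every g ∈ G}. Then |P| ≥ p^{n−1} − p^{11n/12+2} (in particular P is nonempty), and for every x ∈ X̂_{n,p}, the number of f ∈ P with f(x) = 1 is at most (1/p + p^{−n/13})·|P|. Consequently, no matter which x ∈ X̂_{n,p} is output after the queries in G are answered by the value E_{y∈X̂_{n,p}}[g(y)], a predicate drawn uniformly from P makes x positive with probability at most 1/p + p^{−n/13}. -/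

import Mathlib

/-- The domain `X̂_{n,p}`: vectors over `ℤ_p` whose last `n-1` coordinates are
not all zero. -/
def Xhat (n p : ℕ) : Set (Fin n → ZMod p) :=
  {x | ∃ i : Fin n, (i : ℕ) ≠ 0 ∧ x i ≠ 0}

/-- The positive set of the booleanized linear function `L_a`. -/
def posSet (n p : ℕ) (a : Fin n → ZMod p) : Set (Fin n → ZMod p) :=
  {x ∈ Xhat n p | ∑ i, a i * x i = 1}

/-- Expectation of `g` over the uniform distribution on the finite set `S`. -/
noncomputable def expectOn {α : Type*} (S : Set α) (g : α → ℝ) : ℝ :=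
  (∑ᶠ x ∈ S, g x) / S.ncard

/-- `L_a` is normalized: `a[0] = 1`. -/
def Normalized (n p : ℕ) (a : Fin n → ZMod p) : Prop :=
  ∀ i : Fin n, (i : ℕ) = 0 → a i = 1

/-- `L_a` is `ξ`-independent from the query function `g`. -/
def XiIndep (n p : ℕ) (a : Fin n → ZMod p) (g : (Fin n → ZMod p) → ℝ) (ξ : ℝ) : Prop :=
  |expectOn (posSet n p a) g - expectOn (Xhat n p) g| ≤ ξ

/-!
Write `k = p ^ (n - 1) - 1`. The discrepancy `E_{S_a} g - E_X g` is the inner product of `g` with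
`v_a = u_{S_a} - u_X`, where `u_S` is the uniform probability vector on `S`. The positive sets `S_a`
of normalized predicates all have `k` elements, any two of them meet in `p ^ (n - 2) - 1` points,
and `|X| = p * k`, so the Gram matrix of the `v_a` is a scalar matrix minus a nonnegative constant.
By duality `∑_a (E_{S_a} g - E_X g) ^ 2 ≤ |X| / k = p` whenever `|g| ≤ 1`, and Chebyshev's
inequality shows that one query eliminates at most `p / ξ ^ 2` predicates. A point of `X` is
positive for exactly `p ^ (n - 2)` of the `p ^ (n - 1)` normalized predicates, a fraction `1 / p`
which stays almost the same among the survivors.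
-/

section NearlyOrthogonal

open scoped RealInnerProductSpace

variable {ι E : Type*} [SeminormedAddCommGroup E] [InnerProductSpace ℝ E]
  {s : Finset ι} {v : ι → E} {D : ℝ}

/- Large sieve duality: the hypothesis bounds the operator `c ↦ ∑ i, c i • v i`, the conclusion its
adjoint `x ↦ (⟪v i, x⟫)ᵢ`. -/
theorem sum_inner_sq_le_of_norm_sum_smul_sq_le (hD : 0 ≤ D)
    (hv : ∀ c : ι → ℝ, ‖∑ i ∈ s, c i • v i‖ ^ 2 ≤ D * ∑ i ∈ s, c i ^ 2) (x : E) :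
    ∑ i ∈ s, ⟪v i, x⟫ ^ 2 ≤ D * ‖x‖ ^ 2 := by
  set T := ∑ i ∈ s, ⟪v i, x⟫ ^ 2 with hT
  have hT0 : 0 ≤ T := Finset.sum_nonneg fun _ _ => sq_nonneg _
  have hTx : T = ⟪∑ i ∈ s, ⟪v i, x⟫ • v i, x⟫ := by
    simp only [hT, sum_inner, real_inner_smul_left, sq]
  have hTT : T * T ≤ D * ‖x‖ ^ 2 * T := calc
    T * T = ⟪∑ i ∈ s, ⟪v i, x⟫ • v i, x⟫ ^ 2 := by rw [← hTx, sq]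
    _ ≤ (‖∑ i ∈ s, ⟪v i, x⟫ • v i‖ * ‖x‖) ^ 2 := by
      rw [← sq_abs]; gcongr; exact abs_real_inner_le_norm _ _
    _ ≤ D * T * ‖x‖ ^ 2 := by rw [mul_pow]; gcongr; exact hv _
    _ = D * ‖x‖ ^ 2 * T := by ring
  rcases hT0.eq_or_lt with h | h
  · rw [← h]; positivity
  · exact le_of_mul_le_mul_right hTT h

theorem norm_sum_smul_sq_le_of_inner_eq [DecidableEq ι] {c : ℝ} (hc : 0 ≤ c)
    (hv : ∀ i ∈ s, ∀ j ∈ s, ⟪v i, v j⟫ = (if i = j then D else 0) - c) (r : ι → ℝ) :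
    ‖∑ i ∈ s, r i • v i‖ ^ 2 ≤ D * ∑ i ∈ s, r i ^ 2 := by
  have h : ‖∑ i ∈ s, r i • v i‖ ^ 2 = D * ∑ i ∈ s, r i ^ 2 - c * (∑ i ∈ s, r i) ^ 2 := calc
    _ = ∑ i ∈ s, ∑ j ∈ s, r i * (r j * ((if i = j then D else 0) - c)) := by
      rw [← real_inner_self_eq_norm_sq, sum_inner]
      refine Finset.sum_congr rfl fun i hi => ?_
      rw [inner_sum]
      refine Finset.sum_congr rfl fun j hj => ?_
      rw [real_inner_smul_left, real_inner_smul_right, hv i hi j hj]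
    _ = ∑ i ∈ s, (D * r i ^ 2 - c * (r i * ∑ j ∈ s, r j)) := by
      refine Finset.sum_congr rfl fun i hi => ?_
      simp only [mul_sub, mul_ite, mul_zero, Finset.sum_sub_distrib, Finset.sum_ite_eq, hi,
        if_true, Finset.mul_sum]
      congr 1
      · ring
      · exact Finset.sum_congr rfl fun _ _ => by ring
    _ = _ := by
      rw [Finset.sum_sub_distrib, ← Finset.mul_sum, ← Finset.mul_sum, ← Finset.sum_mul,
        sq (∑ i ∈ s, r i)]
  rw [h]
  exact sub_le_self _ (by positivity)

end NearlyOrthogonal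

section UniformVec

open scoped RealInnerProductSpace

variable {α : Type*}

theorem finsum_mem_const {M : Type*} [AddCommMonoid M] {S : Set α} (hS : S.Finite) (c : M) :
    ∑ᶠ x ∈ S, c = S.ncard • c := by
  rw [finsum_mem_eq_finite_toFinset_sum _ hS, Finset.sum_const, Set.ncard_eq_toFinset_card S hS]

theorem expectOn_congr {S : Set α} {g h : α → ℝ} (hgh : Set.EqOn g h S) :
    expectOn S g = expectOn S h := by
  rw [expectOn, expectOn, finsum_mem_congr rfl hgh]

variable [Fintype α]

/-- The uniform probability vector on `S`, as an element of Euclidean space, so that pairing with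
`g` computes `expectOn S g`. It is `0` when `S` is empty. -/
noncomputable def uniformVec (S : Set α) : EuclideanSpace ℝ α :=
  WithLp.toLp 2 (S.indicator fun _ => (S.ncard : ℝ)⁻¹)

theorem inner_uniformVec_toLp (S : Set α) (g : α → ℝ) :
    ⟪uniformVec S, WithLp.toLp 2 g⟫ = expectOn S g := by
  rw [uniformVec, EuclideanSpace.inner_toLp_toLp, star_trivial, dotProduct, expectOn,
    finsum_mem_def, finsum_eq_sum_of_fintype, Finset.sum_div]
  refine Finset.sum_congr rfl fun x _ => ?_
  by_cases hx : x ∈ S <;> simp [hx, div_eq_mul_inv]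

theorem inner_uniformVec_uniformVec (S T : Set α) :
    ⟪uniformVec S, uniformVec T⟫ = (S ∩ T).ncard / (S.ncard * T.ncard : ℝ) := by
  have hsum : ∑ᶠ x ∈ S, T.indicator (fun _ => (T.ncard : ℝ)⁻¹) x =
      (S ∩ T).ncard * (T.ncard : ℝ)⁻¹ := by
    rw [finsum_mem_def, Set.indicator_indicator, ← finsum_mem_def, ← nsmul_eq_mul]
    exact finsum_mem_const (Set.toFinite _) _
  refine (inner_uniformVec_toLp S _).trans ?_
  rw [expectOn, hsum]
  field_simp

theorem inner_uniformVec_sub_sub {X S T : Set α} (hS : S ⊆ X) (hT : T ⊆ X) (hS0 : S.Nonempty)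
    (hT0 : T.Nonempty) :
    ⟪uniformVec S - uniformVec X, uniformVec T - uniformVec X⟫ =
      (S ∩ T).ncard / (S.ncard * T.ncard : ℝ) - (X.ncard : ℝ)⁻¹ := by
  have hSc : (S.ncard : ℝ) ≠ 0 := Nat.cast_ne_zero.2 hS0.ncard_pos.ne'
  have hTc : (T.ncard : ℝ) ≠ 0 := Nat.cast_ne_zero.2 hT0.ncard_pos.ne'
  have hXc : (X.ncard : ℝ) ≠ 0 := Nat.cast_ne_zero.2 (hS0.mono hS).ncard_pos.ne'
  simp only [inner_sub_left, inner_sub_right, inner_uniformVec_uniformVec, Set.inter_self,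
    Set.inter_eq_left.2 hS, Set.inter_eq_right.2 hT]
  field_simp
  ring

theorem expectOn_sub_expectOn_eq_inner {S X : Set α} (hSX : S ⊆ X) (g : α → ℝ) :
    expectOn S g - expectOn X g =
      ⟪uniformVec S - uniformVec X, WithLp.toLp 2 (X.indicator g)⟫ := by
  have hgX : Set.EqOn g (X.indicator g) X := fun x hx => (Set.indicator_of_mem hx g).symm
  rw [inner_sub_left, inner_uniformVec_toLp, inner_uniformVec_toLp, expectOn_congr (hgX.mono hSX),
    expectOn_congr hgX]

theorem norm_toLp_indicator_sq_le_ncard {X : Set α} {g : α → ℝ} (hg : ∀ x ∈ X, |g x| ≤ 1) :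
    ‖WithLp.toLp 2 (X.indicator g)‖ ^ 2 ≤ X.ncard := calc
  _ = ∑ x, X.indicator g x ^ 2 := EuclideanSpace.real_norm_sq_eq _
  _ ≤ ∑ x, X.indicator (fun _ => (1 : ℝ)) x := by
    refine Finset.sum_le_sum fun x _ => ?_
    by_cases hx : x ∈ X
    · simpa [hx, sq_le_one_iff_abs_le_one] using hg x hx
    · simp [hx]
  _ = X.ncard := by
    rw [← finsum_eq_sum_of_fintype, ← finsum_mem_def, finsum_mem_const X.toFinite, nsmul_one]

end UniformVec

section Discrepancy

open scoped RealInnerProductSpace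

variable {ι α : Type*} {A : Finset ι}

theorem sum_sq_expectOn_sub_le [Finite α] {S : ι → Set α} {X : Set α} {k l : ℕ} (hk : 0 < k)
    (hSX : ∀ a ∈ A, S a ⊆ X) (hS : ∀ a ∈ A, (S a).ncard = k)
    (hinter : ∀ a ∈ A, ∀ b ∈ A, a ≠ b → (S a ∩ S b).ncard = l) (hl : l * X.ncard ≤ k ^ 2)
    {g : α → ℝ} (hg : ∀ x ∈ X, |g x| ≤ 1) :
    ∑ a ∈ A, (expectOn (S a) g - expectOn X g) ^ 2 ≤ (X.ncard / k : ℝ) := by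
  classical
  cases nonempty_fintype α
  obtain rfl | ⟨a₀, ha₀⟩ := A.eq_empty_or_nonempty
  · simp only [Finset.sum_empty]; positivity
  have hkX : k ≤ X.ncard := hS a₀ ha₀ ▸ Set.ncard_le_ncard (hSX a₀ ha₀)
  have hX : (0 : ℝ) < X.ncard := by exact_mod_cast hk.trans_le hkX
  have hlk : (l : ℝ) ≤ k := by
    have : l * k ≤ k * k := (Nat.mul_le_mul_left l hkX).trans (hl.trans_eq (sq k))
    exact_mod_cast Nat.le_of_mul_le_mul_right this hk
  have hne : ∀ a ∈ A, (S a).Nonempty := fun a ha =>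
    Set.nonempty_of_ncard_ne_zero (by rw [hS a ha]; exact hk.ne')
  have hgram : ∀ a ∈ A, ∀ b ∈ A,
      ⟪uniformVec (S a) - uniformVec X, uniformVec (S b) - uniformVec X⟫ =
        (if a = b then ((k - l) / k ^ 2 : ℝ) else 0) - ((X.ncard : ℝ)⁻¹ - l / k ^ 2) := by
    intro a ha b hb
    rw [inner_uniformVec_sub_sub (hSX a ha) (hSX b hb) (hne a ha) (hne b hb), hS a ha, hS b hb]
    split_ifs with hab
    · rw [hab, Set.inter_self, hS b hb]; ring
    · rw [hinter a ha b hb hab]; ring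
  have hoffset : (0 : ℝ) ≤ (X.ncard : ℝ)⁻¹ - l / k ^ 2 := by
    rw [sub_nonneg, div_le_iff₀ (by positivity), inv_mul_eq_div, le_div_iff₀ hX]
    exact_mod_cast hl
  have hscale : (0 : ℝ) ≤ (k - l) / k ^ 2 := div_nonneg (sub_nonneg.2 hlk) (by positivity)
  calc ∑ a ∈ A, (expectOn (S a) g - expectOn X g) ^ 2
      = ∑ a ∈ A, ⟪uniformVec (S a) - uniformVec X, WithLp.toLp 2 (X.indicator g)⟫ ^ 2 :=
        Finset.sum_congr rfl fun a ha => by rw [expectOn_sub_expectOn_eq_inner (hSX a ha)]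
    _ ≤ (k - l) / k ^ 2 * ‖WithLp.toLp 2 (X.indicator g)‖ ^ 2 :=
        sum_inner_sq_le_of_norm_sum_smul_sq_le hscale
          (norm_sum_smul_sq_le_of_inner_eq hoffset hgram) _
    _ ≤ k / k ^ 2 * X.ncard := by
        gcongr
        · exact sub_le_self _ l.cast_nonneg
        · exact norm_toLp_indicator_sq_le_ncard hg
    _ = X.ncard / k := by field_simp

theorem card_filter_lt_abs_mul_sq_le (A : Finset ι) (f : ι → ℝ) {ξ : ℝ} (hξ : 0 ≤ ξ) :
    ({i ∈ A | ξ < |f i|}.card : ℝ) * ξ ^ 2 ≤ ∑ i ∈ A, f i ^ 2 := by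
  rw [← nsmul_eq_mul]
  calc
    _ ≤ ∑ i ∈ A with ξ < |f i|, f i ^ 2 := by
        refine Finset.card_nsmul_le_sum _ _ _ fun i hi => ?_
        rw [← sq_abs (f i)]
        gcongr
        exact (Finset.mem_filter.1 hi).2.le
    _ ≤ ∑ i ∈ A, f i ^ 2 :=
      Finset.sum_le_sum_of_subset_of_nonneg (Finset.filter_subset _ _) fun _ _ _ => sq_nonneg _

end Discrepancy

section LinearSystem

theorem natCard_mul_ncard_preimage_singleton {G H : Type*} [AddGroup G] [AddGroup H]
    {f : G →+ H} (hf : Function.Surjective f) (y : H) :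
    Nat.card H * (f ⁻¹' {y}).ncard = Nat.card G := by
  obtain ⟨x, rfl⟩ := hf y
  have hcoset : f ⁻¹' {f x} = (x + ·) '' (f.ker : Set G) := by
    ext z
    simp [AddMonoidHom.mem_ker, neg_add_eq_zero, eq_comm (a := f z)]
  rw [hcoset, Set.ncard_image_of_injective _ (add_right_injective x), ← f.ker.card_mul_index,
    AddSubgroup.index_ker, f.range_eq_top.2 hf, AddSubgroup.card_top, mul_comm]
  rfl

variable {F ι κ : Type*} [Field F] [Fintype κ]

open Matrix Module

theorem mulVec_surjective_of_linearIndependent_row [Finite ι] {A : Matrix ι κ F}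
    (hA : LinearIndependent F A.row) : Function.Surjective A.mulVec := by
  cases nonempty_fintype ι
  have hrange : LinearMap.range A.mulVecLin = ⊤ :=
    Submodule.eq_top_of_finrank_eq (by rw [← Matrix.rank, hA.rank_matrix, finrank_pi])
  exact LinearMap.range_eq_top.1 hrange

theorem natCard_pow_mul_ncard_mulVec_eq [Fintype ι] {A : Matrix ι κ F}
    (hA : LinearIndependent F A.row) (b : ι → F) :
    Nat.card F ^ Fintype.card ι * {x | A *ᵥ x = b}.ncard = Nat.card F ^ Fintype.card κ := by
  have h := natCard_mul_ncard_preimage_singleton (f := A.mulVecLin.toAddMonoidHom)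
    (mulVec_surjective_of_linearIndependent_row hA) b
  rwa [Nat.card_fun, Nat.card_fun, Nat.card_eq_fintype_card (α := ι),
    Nat.card_eq_fintype_card (α := κ)] at h

theorem natCard_mul_ncard_dotProduct_eq {v : κ → F} (hv : v ≠ 0) (c : F) :
    Nat.card F * {x | v ⬝ᵥ x = c}.ncard = Nat.card F ^ Fintype.card κ := by
  have hli : LinearIndependent F (of ![v]).row :=
    LinearIndependent.of_subsingleton 0 hv
  simpa [funext_iff, mulVec] using natCard_pow_mul_ncard_mulVec_eq hli ![c]

theorem natCard_sq_mul_ncard_dotProduct_eq_and {v w : κ → F}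
    (hvw : LinearIndependent F ![v, w]) (c d : F) :
    Nat.card F ^ 2 * {x | v ⬝ᵥ x = c ∧ w ⬝ᵥ x = d}.ncard = Nat.card F ^ Fintype.card κ := by
  have hli : LinearIndependent F (of ![v, w]).row := hvw
  simpa [funext_iff, mulVec, Fin.forall_fin_two] using natCard_pow_mul_ncard_mulVec_eq hli ![c, d]

end LinearSystem

section Counting

open Matrix

variable {n p : ℕ} [NeZero n]

theorem mem_Xhat_iff {x : Fin n → ZMod p} : x ∈ Xhat n p ↔ ∃ i, i ≠ 0 ∧ x i ≠ 0 := by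
  simp only [Xhat, Set.mem_ofPred_eq, Fin.val_eq_zero_iff, ne_eq]

theorem normalized_iff {a : Fin n → ZMod p} : Normalized n p a ↔ a 0 = 1 := by
  simp only [Normalized, Fin.val_eq_zero_iff, forall_eq]

theorem compl_Xhat :
    (Xhat n p)ᶜ = Set.range fun c : ZMod p => (Pi.single 0 c : Fin n → ZMod p) := by
  ext x
  simp only [Set.mem_compl_iff, mem_Xhat_iff, Set.mem_range, not_exists, not_and, not_not]
  constructor
  · intro hx
    refine ⟨x 0, funext fun i => ?_⟩
    obtain rfl | hi := eq_or_ne i 0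
    · simp
    · rw [Pi.single_eq_of_ne hi, hx i hi]
  · rintro ⟨c, rfl⟩ i hi
    simp [hi]

theorem posSet_eq_sdiff {a : Fin n → ZMod p} (ha : Normalized n p a) :
    posSet n p a = {x | a ⬝ᵥ x = 1} \ {Pi.single 0 1} := by
  ext x
  simp only [posSet, Set.mem_ofPred_eq, Set.mem_sdiff, Set.mem_singleton_iff]
  rw [and_comm]
  refine and_congr_right fun hx => ?_
  rw [← not_iff_not, not_not, ← Set.mem_compl_iff, compl_Xhat]
  constructor
  · rintro ⟨c, rfl⟩
    have hc : a 0 * c = 1 := (dotProduct_single a c 0).symm.trans hx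
    rw [normalized_iff.1 ha, one_mul] at hc
    rw [hc]
  · rintro rfl
    exact ⟨1, rfl⟩

theorem linearIndependent_pair_of_normalized [Fact p.Prime] {a b : Fin n → ZMod p}
    (ha : Normalized n p a) (hb : Normalized n p b) (hab : a ≠ b) :
    LinearIndependent (ZMod p) ![a, b] := by
  refine LinearIndependent.pair_iff.2 fun s t hst => ?_
  have hs : s = -t := by
    have h0 := congrFun hst 0
    simp only [Pi.add_apply, Pi.smul_apply, normalized_iff.1 ha, normalized_iff.1 hb, smul_eq_mul,
      mul_one, Pi.zero_apply] at h0
    exact eq_neg_of_add_eq_zero_left h0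
  have ht : t • (b - a) = 0 := by rw [smul_sub, ← hst, hs, neg_smul]; abel
  have ht0 : t = 0 := (smul_eq_zero.1 ht).resolve_right (sub_ne_zero.2 hab.symm)
  exact ⟨by rw [hs, ht0, neg_zero], ht0⟩

theorem linearIndependent_pair_single_of_mem_Xhat [Fact p.Prime] {x : Fin n → ZMod p}
    (hx : x ∈ Xhat n p) : LinearIndependent (ZMod p) ![Pi.single 0 1, x] := by
  obtain ⟨i, hi, hxi⟩ := mem_Xhat_iff.1 hx
  refine LinearIndependent.pair_iff.2 fun s t hst => ?_
  have ht : t = 0 := by simpa [hi, hxi] using congrFun hst i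
  exact ⟨by simpa [ht] using congrFun hst 0, ht⟩

variable (n p) [Fact p.Prime]

theorem ncard_Xhat_add : (Xhat n p).ncard + p = p ^ n := by
  have hinj : Function.Injective fun c : ZMod p => (Pi.single 0 c : Fin n → ZMod p) :=
    Pi.single_injective (M := fun _ => ZMod p) 0
  have h := Set.ncard_add_ncard_compl (Xhat n p)
  rwa [compl_Xhat, Set.ncard_range_of_injective hinj, Nat.card_zmod,
    Nat.card_fun, Nat.card_zmod, Nat.card_fin] at h

theorem mul_ncard_normalized : p * {a | Normalized n p a}.ncard = p ^ n := by
  have h := natCard_mul_ncard_dotProduct_eq (F := ZMod p) (v := Pi.single (0 : Fin n) 1) (by simp) 1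
  simpa [normalized_iff] using h

variable {n p}

theorem mul_ncard_posSet_add_one {a : Fin n → ZMod p} (ha : Normalized n p a) :
    p * ((posSet n p a).ncard + 1) = p ^ n := by
  have ha0 : a 0 = 1 := normalized_iff.1 ha
  have hne : a ≠ 0 := fun h => by simp [h] at ha0
  rw [posSet_eq_sdiff ha, Set.ncard_sdiff_singleton_add_one (by simp [ha0])]
  simpa using natCard_mul_ncard_dotProduct_eq hne 1

theorem sq_mul_ncard_posSet_inter_add_one {a b : Fin n → ZMod p} (ha : Normalized n p a)
    (hb : Normalized n p b) (hab : a ≠ b) :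
    p ^ 2 * ((posSet n p a ∩ posSet n p b).ncard + 1) = p ^ n := by
  have ha0 : a 0 = 1 := normalized_iff.1 ha
  have hb0 : b 0 = 1 := normalized_iff.1 hb
  rw [posSet_eq_sdiff ha, posSet_eq_sdiff hb, ← Set.sdiff_inter_distrib_right,
    Set.ncard_sdiff_singleton_add_one (by simp [ha0, hb0])]
  simpa [Set.ofPred_and] using natCard_sq_mul_ncard_dotProduct_eq_and
    (linearIndependent_pair_of_normalized ha hb hab) 1 1

theorem sq_mul_ncard_normalized_dotProduct_eq_one {x : Fin n → ZMod p} (hx : x ∈ Xhat n p) :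
    p ^ 2 * {a | Normalized n p a ∧ a ⬝ᵥ x = 1}.ncard = p ^ n := by
  have h := natCard_sq_mul_ncard_dotProduct_eq_and
    (linearIndependent_pair_single_of_mem_Xhat hx) 1 1
  simpa [normalized_iff, dotProduct_comm x] using h

end Counting

section Survivors

variable {n p : ℕ}

/-- The candidate set `P`: normalized `a` for which `L_a` is `ξ`-independent from every query
in `G`, i.e. consistent with answering each query by its average over the domain. -/
def survivors (n p : ℕ) (G : Finset ((Fin n → ZMod p) → ℝ)) (ξ : ℝ) : Set (Fin n → ZMod p) :=
  {a | Normalized n p a ∧ ∀ g ∈ G, XiIndep n p a g ξ}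

/-- The normalized `a` that answering the query `g` by its domain average rules out. -/
def eliminated (n p : ℕ) (g : (Fin n → ZMod p) → ℝ) (ξ : ℝ) : Set (Fin n → ZMod p) :=
  {a | Normalized n p a ∧ ¬ XiIndep n p a g ξ}

theorem survivors_eq_sdiff (G : Finset ((Fin n → ZMod p) → ℝ)) (ξ : ℝ) :
    survivors n p G ξ = {a | Normalized n p a} \ ⋃ g ∈ G, eliminated n p g ξ := by
  ext a
  simp only [survivors, eliminated, Set.mem_ofPred_eq, Set.mem_sdiff, Set.mem_iUnion, not_exists,
    not_and, not_not]
  exact and_congr_right fun ha => forall₂_congr fun g _ => by simp only [ha, true_imp_iff]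

variable [Fact p.Prime]

theorem sum_sq_expectOn_posSet_sub_le (hn : 2 ≤ n) {A : Finset (Fin n → ZMod p)}
    (hA : ∀ a ∈ A, Normalized n p a) {g : (Fin n → ZMod p) → ℝ} (hg : ∀ x ∈ Xhat n p, |g x| ≤ 1) :
    ∑ a ∈ A, (expectOn (posSet n p a) g - expectOn (Xhat n p) g) ^ 2 ≤ p := by
  have : NeZero n := ⟨by lia⟩
  have hp : 2 ≤ p := (Fact.out : p.Prime).two_le
  obtain ⟨m, rfl⟩ := Nat.exists_eq_add_of_le' hn
  obtain ⟨l, hl⟩ : ∃ l, p ^ m = l + 1 := Nat.exists_eq_succ_of_ne_zero (by positivity)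
  obtain ⟨k, hk⟩ : ∃ k, p ^ (m + 1) = k + 1 := Nat.exists_eq_succ_of_ne_zero (by positivity)
  have hkl : k + 1 = p * (l + 1) := by rw [← hk, ← hl, pow_succ']
  have hk0 : 0 < k := by nlinarith
  have hX : (Xhat (m + 2) p).ncard = p * k := by
    have h := ncard_Xhat_add (m + 2) p
    rw [pow_succ', hk] at h
    linarith
  have hpos : ∀ a ∈ A, (posSet (m + 2) p a).ncard = k := fun a ha => by
    have h := mul_ncard_posSet_add_one (hA a ha)
    rw [pow_succ', hk] at h
    exact Nat.succ_injective (Nat.eq_of_mul_eq_mul_left (by lia) h)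
  have hinter : ∀ a ∈ A, ∀ b ∈ A, a ≠ b →
      (posSet (m + 2) p a ∩ posSet (m + 2) p b).ncard = l := fun a ha b hb hab => by
    have h := sq_mul_ncard_posSet_inter_add_one (hA a ha) (hA b hb) hab
    rw [pow_add, hl, mul_comm (l + 1)] at h
    exact Nat.succ_injective (Nat.eq_of_mul_eq_mul_left (by positivity) h)
  have hlX : l * (Xhat (m + 2) p).ncard ≤ k ^ 2 := by
    have : l * p ≤ k := by nlinarith
    calc l * (Xhat (m + 2) p).ncard = l * p * k := by rw [hX, mul_assoc]
      _ ≤ k ^ 2 := by rw [sq]; gcongr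
  refine (sum_sq_expectOn_sub_le hk0 (fun a _ => Set.sep_subset _ _) hpos hinter hlX hg).trans_eq ?_
  rw [hX, Nat.cast_mul]
  field_simp

theorem ncard_eliminated_le (hn : 2 ≤ n) {g : (Fin n → ZMod p) → ℝ}
    (hg : ∀ x ∈ Xhat n p, |g x| ≤ 1) {ξ : ℝ} (hξ : 0 < ξ) :
    ((eliminated n p g ξ).ncard : ℝ) ≤ p / ξ ^ 2 := by
  classical
  rw [le_div_iff₀ (by positivity)]
  let A : Finset (Fin n → ZMod p) := {a | Normalized n p a}
  have helim : eliminated n p g ξ =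
      ({a ∈ A | ξ < |expectOn (posSet n p a) g - expectOn (Xhat n p) g|} : Finset _) := by
    ext a
    simp [A, eliminated, XiIndep]
  rw [helim, Set.ncard_coe_finset]
  exact (card_filter_lt_abs_mul_sq_le A _ hξ.le).trans
    (sum_sq_expectOn_posSet_sub_le hn (fun a ha => (Finset.mem_filter.1 ha).2) hg)

theorem pow_le_ncard_survivors_add (hn : 2 ≤ n) {G : Finset ((Fin n → ZMod p) → ℝ)}
    (hG : ∀ g ∈ G, ∀ x ∈ Xhat n p, |g x| ≤ 1) {ξ : ℝ} (hξ : 0 < ξ) :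
    (p : ℝ) ^ (n - 1) ≤ (survivors n p G ξ).ncard + G.card * (p / ξ ^ 2) := by
  have : NeZero n := ⟨by lia⟩
  have hp : 0 < p := (Fact.out : p.Prime).pos
  have hcard : {a | Normalized n p a}.ncard = p ^ (n - 1) := by
    refine Nat.eq_of_mul_eq_mul_left hp ?_
    rw [mul_ncard_normalized, ← pow_succ', Nat.sub_add_cancel (by lia)]
  have hle : p ^ (n - 1) ≤ (survivors n p G ξ).ncard + ∑ g ∈ G, (eliminated n p g ξ).ncard := calc
    p ^ (n - 1) = {a | Normalized n p a}.ncard := hcard.symm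
    _ ≤ (survivors n p G ξ).ncard + (⋃ g ∈ G, eliminated n p g ξ).ncard := by
      rw [survivors_eq_sdiff]; exact Set.ncard_le_ncard_sdiff_add_ncard _ _
    _ ≤ _ := by gcongr; exact G.set_ncard_biUnion_le _
  calc (p : ℝ) ^ (n - 1)
      ≤ (survivors n p G ξ).ncard + ∑ g ∈ G, ((eliminated n p g ξ).ncard : ℝ) := by
        exact_mod_cast hle
    _ ≤ (survivors n p G ξ).ncard + ∑ _g ∈ G, p / ξ ^ 2 := by
        gcongr with g hg
        exact ncard_eliminated_le hn (hG g hg) hξ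
    _ = _ := by rw [Finset.sum_const, nsmul_eq_mul]

theorem ncard_survivors_dotProduct_eq_one_mul_le [NeZero n] (G : Finset ((Fin n → ZMod p) → ℝ))
    (ξ : ℝ) {x : Fin n → ZMod p} (hx : x ∈ Xhat n p) :
    {a ∈ survivors n p G ξ | ∑ i, a i * x i = 1}.ncard * p ≤ p ^ (n - 1) := by
  have hsub : {a ∈ survivors n p G ξ | ∑ i, a i * x i = 1} ⊆
      {a | Normalized n p a ∧ ∑ i, a i * x i = 1} := fun a ha => ⟨ha.1.1, ha.2⟩
  refine Nat.le_of_mul_le_mul_left ?_ (Fact.out : p.Prime).pos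
  calc p * ({a ∈ survivors n p G ξ | ∑ i, a i * x i = 1}.ncard * p)
      = p ^ 2 * {a ∈ survivors n p G ξ | ∑ i, a i * x i = 1}.ncard := by ring
    _ ≤ p ^ 2 * {a | Normalized n p a ∧ ∑ i, a i * x i = 1}.ncard := by
        gcongr; exact Set.toFinite _
    _ = p ^ n := sq_mul_ncard_normalized_dotProduct_eq_one hx
    _ = p * p ^ (n - 1) := (mul_pow_sub_one (NeZero.ne n) p).symm

end Survivors

section Exponents

theorem rpow_natCast_sub_one (x : ℝ) {m : ℕ} (hm : m ≠ 0) : x ^ ((m : ℝ) - 1) = x ^ (m - 1) := by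
  rw [← Real.rpow_natCast, Nat.cast_sub (Nat.one_le_iff_ne_zero.2 hm), Nat.cast_one]

variable {p n : ℝ}

theorem rpow_mul_div_sq_rpow_le (hp : 1 ≤ p) :
    p ^ (n / 4) * (p / (p ^ (-n / 3)) ^ 2) ≤ p ^ (11 * n / 12 + 2) := by
  have hp0 : 0 < p := by linarith
  calc p ^ (n / 4) * (p / (p ^ (-n / 3)) ^ 2)
      = p ^ (n / 4 + (1 - -n / 3 * 2)) := by
        rw [Real.rpow_add hp0, Real.rpow_sub hp0, Real.rpow_one, Real.rpow_mul hp0.le,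
          Real.rpow_two]
    _ ≤ p ^ (11 * n / 12 + 2) := Real.rpow_le_rpow_of_exponent_le hp (by linarith)

theorem rpow_sub_one_div_le (hp : 2 ≤ p) (hn : 468 ≤ n) :
    p ^ (n - 1) / p ≤
      (1 / p + p ^ (-n / 13)) * (p ^ (n - 1) - p ^ (11 * n / 12 + 2)) := by
  have hp0 : 0 < p := by linarith
  have hp1 : 1 ≤ p := by linarith
  have hsum : 1 / p + p ^ (-n / 13) ≤ 1 := by
    have hε : p ^ (-n / 13) ≤ 1 / p := by
      rw [one_div, ← Real.rpow_neg_one]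
      exact Real.rpow_le_rpow_of_exponent_le hp1 (by linarith)
    have hhalf : 1 / p ≤ 1 / 2 := one_div_le_one_div_of_le two_pos hp
    linarith
  have hloss : p ^ (11 * n / 12 + 2) ≤ p ^ (-n / 13) * p ^ (n - 1) := by
    rw [← Real.rpow_add hp0]
    exact Real.rpow_le_rpow_of_exponent_le hp1 (by linarith)
  have hloss' := mul_le_of_le_one_left (Real.rpow_nonneg hp0.le (11 * n / 12 + 2)) hsum
  calc p ^ (n - 1) / p
      ≤ p ^ (n - 1) / p + (p ^ (-n / 13) * p ^ (n - 1) -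
          (1 / p + p ^ (-n / 13)) * p ^ (11 * n / 12 + 2)) :=
        le_add_of_nonneg_right (by linarith)
    _ = _ := by ring

end Exponents

theorem rpow_sub_rpow_le_ncard_survivors {n p : ℕ} [Fact p.Prime] (hn : 2 ≤ n)
    {G : Finset ((Fin n → ZMod p) → ℝ)} (hG : ∀ g ∈ G, ∀ x ∈ Xhat n p, |g x| ≤ 1)
    (hGcard : (G.card : ℝ) ≤ (p : ℝ) ^ ((n : ℝ) / 4)) :
    (p : ℝ) ^ ((n : ℝ) - 1) - (p : ℝ) ^ (11 * (n : ℝ) / 12 + 2) ≤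
      (survivors n p G ((p : ℝ) ^ (-(n : ℝ) / 3))).ncard := by
  have hp : (1 : ℝ) < p := by exact_mod_cast (Fact.out : p.Prime).one_lt
  have hremaining := pow_le_ncard_survivors_add hn hG
    (Real.rpow_pos_of_pos (zero_lt_one.trans hp) (-(n : ℝ) / 3))
  have hlost := (mul_le_mul_of_nonneg_right hGcard (by positivity)).trans
    (rpow_mul_div_sq_rpow_le (n := n) hp.le)
  rw [← rpow_natCast_sub_one _ (by lia)] at hremaining
  linarith

theorem stmt3_general {n : ℕ} (hn : 468 ≤ n) {p : ℕ} (hp : p.Prime)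
    {G : Finset ((Fin n → ZMod p) → ℝ)} (hG : ∀ g ∈ G, ∀ x ∈ Xhat n p, |g x| ≤ 1)
    (hGcard : (G.card : ℝ) ≤ (p : ℝ) ^ ((n : ℝ) / 4)) :
    let P := survivors n p G ((p : ℝ) ^ (-(n : ℝ) / 3))
    (P.ncard : ℝ) ≥ (p : ℝ) ^ ((n : ℝ) - 1) - (p : ℝ) ^ (11 * (n : ℝ) / 12 + 2) ∧
    P.Nonempty ∧
    ∀ x ∈ Xhat n p, ({a ∈ P | ∑ i, a i * x i = 1}.ncard : ℝ) ≤
      (1 / (p : ℝ) + (p : ℝ) ^ (-(n : ℝ) / 13)) * P.ncard := by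
  intro P
  have : Fact p.Prime := ⟨hp⟩
  have : NeZero n := ⟨by lia⟩
  have hp2 : (2 : ℝ) ≤ p := by exact_mod_cast hp.two_le
  have hn' : (468 : ℝ) ≤ n := by exact_mod_cast hn
  have hcard := rpow_sub_rpow_le_ncard_survivors (by lia) hG hGcard
  refine ⟨hcard, ?_, fun x hx => ?_⟩
  · have hgap : (p : ℝ) ^ (11 * (n : ℝ) / 12 + 2) < (p : ℝ) ^ ((n : ℝ) - 1) :=
      Real.rpow_lt_rpow_of_exponent_lt (by linarith) (by linarith)
    have hpos : (0 : ℝ) < P.ncard := (sub_pos.2 hgap).trans_le hcard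
    exact Set.nonempty_of_ncard_ne_zero (by exact_mod_cast hpos.ne')
  · calc ({a ∈ P | ∑ i, a i * x i = 1}.ncard : ℝ)
        ≤ (p : ℝ) ^ ((n : ℝ) - 1) / p := by
          rw [le_div_iff₀ (by positivity), rpow_natCast_sub_one _ (NeZero.ne n)]
          exact_mod_cast ncard_survivors_dotProduct_eq_one_mul_le G _ hx
      _ ≤ (1 / (p : ℝ) + (p : ℝ) ^ (-(n : ℝ) / 13)) *
          ((p : ℝ) ^ ((n : ℝ) - 1) - (p : ℝ) ^ (11 * (n : ℝ) / 12 + 2)) :=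
          rpow_sub_one_div_le hp2 hn'
      _ ≤ (1 / (p : ℝ) + (p : ℝ) ^ (-(n : ℝ) / 13)) * P.ncard := by gcongr

/-- after at most `p^(n/4)` queries, each answered with the domain
average, the surviving candidate set `P` of normalized booleanized linear
functions has at least `p^(n-1) - p^(11n/12+2)` elements, and every point of
`X̂_{n,p}` is positive for at most a `(1/p + p^(-n/13))` fraction of `P`. -/
theorem stmt3 : ∃ N : ℕ, ∀ n : ℕ, N ≤ n → ∀ p : ℕ, p.Prime →
    ∀ G : Finset ((Fin n → ZMod p) → ℝ),
    (∀ g ∈ G, ∀ x ∈ Xhat n p, g x = 1 ∨ g x = -1) →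
    (G.card : ℝ) ≤ (p : ℝ) ^ ((n : ℝ) / 4) →
    ∀ P : Set (Fin n → ZMod p),
    P = {a | Normalized n p a ∧
          ∀ g ∈ G, XiIndep n p a g ((p : ℝ) ^ (-(n : ℝ) / 3))} →
    ((P.ncard : ℝ) ≥ (p : ℝ) ^ ((n : ℝ) - 1) - (p : ℝ) ^ (11 * (n : ℝ) / 12 + 2)) ∧
    P.Nonempty ∧
    ∀ x ∈ Xhat n p,
      (({a ∈ P | ∑ i, a i * x i = 1}).ncard : ℝ)
        ≤ (1 / (p : ℝ) + (p : ℝ) ^ (-(n : ℝ) / 13)) * P.ncard := by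
  refine ⟨468, fun n hn p hp G hG hGcard P hP =>
    hP ▸ stmt3_general hn hp (fun g hg x hx => ?_) hGcard⟩
  rcases hG g hg x hx with h | h <;> simp [h]
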